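/- arXiv:2209.03658 — 5 statements merged into one kernel-verified Lean document; each statement's English description precedes it below -/
import Mathlib

section
/- Let V : ℝ → ℝ be Borel measurable, locally integrable and nonnegative almost everywhere. Then the map R ↦ λ_V({x ∈ ℝ : |x| ≥ R}) is monotonically nondecreasing and continuous on (0, ∞), and its supremum over R > 0 (equivalently, its limit as R → ∞) equals Σ_V. (This is the paper's Lemma 3.3 for the metric graph G = H = ℝ with the ball B_R(0) = [−R, R].) -/
open MeasureTheory Set Filter Topology
open scoped ENNReal

/-- Rayleigh quotient of a test function `f` for the Schrödinger form with potential `V`. -/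
noncomputable def rayleigh (V : ℝ → ℝ) (f : ℝ → ℝ) : ℝ :=
  (∫ x, ((deriv f x) ^ 2 + V x * (f x) ^ 2)) / (∫ x, (f x) ^ 2)

/-- `f` is an admissible test function for the closed set `S`: continuously differentiable,
not identically zero, with compact support contained in `S`. -/
def TestFor (S : Set ℝ) (f : ℝ → ℝ) : Prop :=
  ContDiff ℝ 1 f ∧ f ≠ 0 ∧ HasCompactSupport f ∧ tsupport f ⊆ S

/-- Dirichlet ground state energy `λ_V(S)`, with `sInf ∅ = ∞`. -/
noncomputable def lambdaV (V : ℝ → ℝ) (S : Set ℝ) : ℝ≥0∞ :=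
  sInf {e : ℝ≥0∞ | ∃ f : ℝ → ℝ, TestFor S f ∧ e = ENNReal.ofReal (rayleigh V f)}

/-- `Σ_V`, the infimum of the essential spectrum of `-d²/dx² + V` on `ℝ`, characterized
Persson-style as `sup_{R>0} λ_V({|x| ≥ R})`. -/
noncomputable def SigmaV (V : ℝ → ℝ) : ℝ≥0∞ :=
  ⨆ R : ℝ, ⨆ _ : 0 < R, lambdaV V {x : ℝ | R ≤ |x|}

/-- A `k`-partition of `ℝ`: `k` closed connected subsets with nonempty interior whose
pairwise intersections are contained in both frontiers. -/
def IsPartitionR (k : ℕ) (G : Fin k → Set ℝ) : Prop :=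
  (∀ i, IsClosed (G i)) ∧ (∀ i, IsConnected (G i)) ∧
    (∀ i, (interior (G i)).Nonempty) ∧
    ∀ i j, i ≠ j → G i ∩ G j ⊆ frontier (G i) ∩ frontier (G j)

/-- The energy `Δ(P)` of a partition: the maximum of the ground state energies. -/
noncomputable def energyR (V : ℝ → ℝ) {k : ℕ} (G : Fin k → Set ℝ) : ℝ≥0∞ :=
  ⨆ i, lambdaV V (G i)

/-- The infimal `k`-partition energy `Δ*_k(ℝ)`. -/
noncomputable def optEnergyR (V : ℝ → ℝ) (k : ℕ) : ℝ≥0∞ :=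
  ⨅ G : {G : Fin k → Set ℝ // IsPartitionR k G}, energyR V G.1

/-- Cauchy-Schwarz for increments of `C¹` functions. -/
lemma sq_sub_le_of_contDiff {f : ℝ → ℝ} (hf : ContDiff ℝ 1 f) (hc : HasCompactSupport f)
    {a b : ℝ} (hab : a ≤ b) :
    (f b - f a) ^ 2 ≤ (b - a) * ∫ x, (deriv f x) ^ 2 := by
  rcases hab.eq_or_lt with rfl | hlt
  · simp
  have hd : Continuous (deriv f) := hf.continuous_deriv le_rfl
  have hint : Integrable (fun x => (deriv f x) ^ 2) := by
    apply Continuous.integrable_of_hasCompactSupport (by fun_prop)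
    exact hc.deriv.comp_left (g := fun y : ℝ => y ^ 2) (by simp)
  have h1 : ∫ x in a..b, deriv f x = f b - f a :=
    intervalIntegral.integral_deriv_eq_sub' f rfl
      (fun x _ => (hf.differentiable one_ne_zero) x) hd.continuousOn
  set m := (f b - f a) / (b - a) with hm
  have hba : 0 < b - a := sub_pos.2 hlt
  have hmD : m * (b - a) = f b - f a := by rw [hm]; field_simp
  have h2 : 0 ≤ ∫ x in a..b, (deriv f x - m) ^ 2 :=
    intervalIntegral.integral_nonneg hab (fun x _ => sq_nonneg _)
  have h3 : ∫ x in a..b, (deriv f x - m) ^ 2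
      = (∫ x in a..b, (deriv f x) ^ 2) - 2 * m * (f b - f a) + m ^ 2 * (b - a) := by
    have : ∀ x, (deriv f x - m) ^ 2 = (deriv f x) ^ 2 - 2 * m * deriv f x + m ^ 2 := by
      intro x; ring
    simp_rw [this]
    rw [intervalIntegral.integral_add, intervalIntegral.integral_sub,
      intervalIntegral.integral_const_mul, h1, intervalIntegral.integral_const]
    · simp; ring
    all_goals exact Continuous.intervalIntegrable (by fun_prop) _ _
  have h4 : ∫ x in a..b, (deriv f x) ^ 2 ≤ ∫ x, (deriv f x) ^ 2 := by
    rw [intervalIntegral.integral_of_le hab]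
    exact setIntegral_le_integral hint (Filter.Eventually.of_forall fun x => sq_nonneg _)
  have h5 : m ^ 2 * (b - a) ≤ ∫ x, (deriv f x) ^ 2 := by
    rw [h3, ← hmD] at h2
    nlinarith
  calc (f b - f a) ^ 2 = (b - a) * (m ^ 2 * (b - a)) := by rw [← hmD]; ring
    _ ≤ _ := mul_le_mul_of_nonneg_left h5 hba.le

lemma sq_sub_le_abs {f : ℝ → ℝ} (hf : ContDiff ℝ 1 f) (hc : HasCompactSupport f)
    (a b : ℝ) : (f b - f a) ^ 2 ≤ |b - a| * ∫ x, (deriv f x) ^ 2 := by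
  rcases le_total a b with h | h
  · rw [abs_of_nonneg (sub_nonneg.2 h)]; exact sq_sub_le_of_contDiff hf hc h
  · rw [abs_sub_comm, abs_of_nonneg (sub_nonneg.2 h)]
    have := sq_sub_le_of_contDiff hf hc h
    nlinarith

set_option maxHeartbeats 1000000 in
/-- The transplantation estimate. -/
lemma transplant (V : ℝ → ℝ)
    (hloc : LocallyIntegrable V) (hpos : ∀ᵐ x ∂(volume : Measure ℝ), 0 ≤ V x)
    (b : ℝ) (hb : 0 < b) :
    ∃ (K : ℝ) (W : ℝ → ℝ), 0 < K ∧ Continuous W ∧ W 0 = 1 ∧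
      ∀ θ s : ℝ, 0 ≤ θ → θ < 1 → K * θ ≤ 1 / 2 → 0 < s → s ≤ b → ∀ f : ℝ → ℝ,
        TestFor {x : ℝ | (1 - θ) * s ≤ |x|} f →
        0 ≤ W θ ∧ ∃ g, TestFor {x : ℝ | s ≤ |x|} g ∧ rayleigh V g ≤ W θ * rayleigh V f := by
  let β : ContDiffBump (0 : ℝ) := ⟨b, b + 1, hb, by linarith⟩
  let η : ℝ → ℝ := fun x => x * β x
  have hβ : ContDiff ℝ 1 (fun x => β x) := β.contDiff
  have hη : ContDiff ℝ 1 η := contDiff_id.mul hβ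
  have hηc : HasCompactSupport η := β.hasCompactSupport.mul_left
  have hη1 : ∀ x, |x| ≤ b → η x = x := by
    intro x hx
    have : β x = 1 := β.one_of_mem_closedBall (by simpa [β] using hx)
    simp [η, this]
  have hη0 : ∀ x, b + 1 ≤ |x| → η x = 0 := by
    intro x hx
    have : β x = 0 := β.zero_of_le_dist (by simpa [β] using hx)
    simp [η, this]
  have hηd : Continuous (deriv η) := hη.continuous_deriv le_rfl
  obtain ⟨C0, hC0⟩ := hηc.exists_bound_of_continuous hη.continuous
  obtain ⟨K0, hK0⟩ := hηc.deriv.exists_bound_of_continuous hηd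
  set C := |C0| with hCdef
  set K := |K0| + 1 with hKdef
  have hC : ∀ x, |η x| ≤ C := fun x => (hC0 x).trans (le_abs_self _)
  have hK : ∀ x, |deriv η x| ≤ K := fun x => ((hK0 x).trans (le_abs_self _)).trans (by linarith)
  have hCnn : 0 ≤ C := abs_nonneg _
  have hKpos : 0 < K := by positivity
  set c := b + 1 with hcdef
  have hcpos : 0 < c := by positivity
  have hVc : IntegrableOn V (Icc (-c) c) := hloc.integrableOn_isCompact isCompact_Icc
  set M := ∫ x in Icc (-c) c, V x with hM
  have hMnn : 0 ≤ M := integral_nonneg_of_ae (ae_restrict_of_ae hpos)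
  refine ⟨K, fun θ => (1 + K * θ) * (1 + K * θ + M * (θ * C + 2 * √(c * C * θ))), hKpos,
    by fun_prop, by simp, ?_⟩
  intro θ s hθ hθ1 hKθ hs hsb f hf
  obtain ⟨hf1, hfne, hfc, hfS⟩ := hf
  have hsq : 0 ≤ √(c * C * θ) := Real.sqrt_nonneg _
  refine ⟨by positivity, ?_⟩
  let ψ : ℝ → ℝ := fun x => x - θ * η x
  have hψ : ContDiff ℝ 1 ψ := contDiff_id.sub (contDiff_const.mul hη)
  let ψ' : ℝ → ℝ := fun x => 1 - θ * deriv η x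
  have hψ'c : Continuous ψ' := by fun_prop
  have hψd : ∀ x, HasDerivAt ψ (ψ' x) x := fun x =>
    (hasDerivAt_id x).sub (((hη.differentiable one_ne_zero) x).hasDerivAt.const_mul θ)
  have hψ'b : ∀ x, 1 / 2 ≤ ψ' x ∧ ψ' x ≤ 1 + K * θ := by
    intro x
    have := abs_le.1 (hK x)
    constructor <;> simp only [ψ'] <;> nlinarith
  have hψmono : StrictMono ψ := strictMono_of_deriv_pos (fun x => by
    rw [(hψd x).deriv]; linarith [(hψ'b x).1])
  have hψclose : ∀ x, |ψ x - x| ≤ θ * C := by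
    intro x
    have : ψ x - x = -(θ * η x) := by simp [ψ]
    rw [this, abs_neg, abs_mul, abs_of_nonneg hθ]
    exact mul_le_mul_of_nonneg_left (hC x) hθ
  have hψsurj : Function.Surjective ψ := by
    apply hψ.continuous.surjective
    · refine tendsto_atTop_mono (f := fun x => x + (-(θ * C))) (fun x => ?_)
        (tendsto_atTop_add_const_right _ _ tendsto_id)
      have := (abs_le.1 (hψclose x)).1
      linarith
    · refine tendsto_atBot_mono (g := ψ) (f := fun x => x + (θ * C)) (fun x => ?_)
        (tendsto_atBot_add_const_right _ _ tendsto_id)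
      have := (abs_le.1 (hψclose x)).2
      linarith
  have hcv : ∀ F : ℝ → ℝ, ∫ x, F x = ∫ x, ψ' x * F (ψ x) := by
    intro F
    have := integral_image_eq_integral_abs_deriv_smul (s := univ) MeasurableSet.univ
      (fun x _ => (hψd x).hasDerivWithinAt) hψmono.injective.injOn F
    rw [image_univ, hψsurj.range_eq, setIntegral_univ, setIntegral_univ] at this
    rw [this]
    refine integral_congr_ae (Filter.Eventually.of_forall fun x => ?_)
    have h := (hψ'b x).1
    simp only [smul_eq_mul]
    rw [abs_of_nonneg (by linarith)]
  have hcomp : ∀ F : ℝ → ℝ, HasCompactSupport F → HasCompactSupport (fun x => F (ψ x)) := by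
    intro F hF
    obtain ⟨ρ, hρ⟩ := hF.isCompact.isBounded.subset_closedBall 0
    refine HasCompactSupport.intro (isCompact_closedBall (0 : ℝ) (ρ + θ * C)) (fun x hx => ?_)
    by_contra hne
    apply hx
    have h1 : ψ x ∈ Metric.closedBall (0 : ℝ) ρ := hρ (subset_tsupport _ hne)
    simp only [Metric.mem_closedBall, dist_zero_right, Real.norm_eq_abs] at h1 ⊢
    have h2 := hψclose x
    have h3 : |x| ≤ |ψ x| + |ψ x - x| := by
      have := abs_sub (ψ x) (ψ x - x)
      simpa using this
    linarith
  let g : ℝ → ℝ := fun x => f (ψ x)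
  have hg1 : ContDiff ℝ 1 g := hf1.comp hψ
  have hgc : HasCompactSupport g := hcomp f hfc
  have hfzero : ∀ x, |x| < (1 - θ) * s → f x = 0 := by
    intro x hx
    by_contra hne
    have := hfS (subset_tsupport _ hne)
    simp only [mem_ofPred_eq] at this
    linarith
  have hψs : ψ s = (1 - θ) * s := by
    simp only [ψ]; rw [hη1 s (by rwa [abs_of_pos hs])]; ring
  have hψns : ψ (-s) = -((1 - θ) * s) := by
    simp only [ψ]; rw [hη1 (-s) (by rwa [abs_neg, abs_of_pos hs])]; ring
  have hgd : ∀ x, deriv g x = deriv f (ψ x) * ψ' x := fun x =>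
    (((hf1.differentiable one_ne_zero) (ψ x)).hasDerivAt.comp x (hψd x)).deriv
  have hfd : Continuous (deriv f) := hf1.continuous_deriv le_rfl
  obtain ⟨x0, hx0⟩ : ∃ x, f x ≠ 0 := Function.ne_iff.1 hfne
  refine ⟨g, ⟨hg1, ?_, hgc, ?_⟩, ?_⟩
  · obtain ⟨y, hy⟩ := hψsurj x0
    intro h
    exact hx0 (by rw [← hy]; exact congrFun h y)
  · refine closure_minimal (fun x hx => ?_) (isClosed_le continuous_const continuous_abs)
    by_contra hlt
    simp only [mem_ofPred_eq, not_le] at hlt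
    apply hx
    apply hfzero
    rw [abs_lt] at hlt ⊢
    have h1 := hψmono hlt.1
    have h2 := hψmono hlt.2
    rw [hψns] at h1
    rw [hψs] at h2
    exact ⟨h1, h2⟩
  -- integrals
  have hsqc : ∀ F : ℝ → ℝ, HasCompactSupport F → HasCompactSupport (fun x => F x ^ 2) :=
    fun F hF => hF.comp_left (g := fun y : ℝ => y ^ 2) (by simp)
  have hIA : ∀ F : ℝ → ℝ, ContDiff ℝ 1 F → HasCompactSupport F →
      Integrable (fun x => deriv F x ^ 2) := fun F hF hFc => by
    have := hF.continuous_deriv le_rfl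
    exact Continuous.integrable_of_hasCompactSupport (by fun_prop) (hsqc _ hFc.deriv)
  have hIV : ∀ F : ℝ → ℝ, ContDiff ℝ 1 F → HasCompactSupport F →
      Integrable (fun x => V x * F x ^ 2) := fun F hF hFc => by
    have := hloc.integrable_smul_left_of_hasCompactSupport (g := fun x => F x ^ 2)
      (hF.continuous.pow 2) (hsqc _ hFc)
    simpa [mul_comm] using this
  set A := ∫ x, deriv f x ^ 2 with hA
  set B := ∫ x, V x * f x ^ 2 with hB
  set N := ∫ x, f x ^ 2 with hN
  have hAnn : 0 ≤ A := integral_nonneg fun x => sq_nonneg _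
  have hBnn : 0 ≤ B := integral_nonneg_of_ae (by
    filter_upwards [hpos] with x hx using mul_nonneg hx (sq_nonneg _))
  have hNpos : 0 < N :=
    Continuous.integral_pos_of_hasCompactSupport_nonneg_nonzero (x := x0)
      (hf1.continuous.pow 2) (hsqc _ hfc) (fun x => sq_nonneg _) (pow_ne_zero 2 hx0)
  have hA' : ∫ x, deriv g x ^ 2 ≤ (1 + K * θ) * A := by
    rw [hA, hcv (fun x => deriv f x ^ 2), ← integral_const_mul]
    refine integral_mono (hIA g hg1 hgc) ?_ (fun x => ?_)
    · refine Integrable.const_mul ?_ _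
      have h1 := hcomp _ (hsqc _ hfc.deriv)
      exact Continuous.integrable_of_hasCompactSupport
        (hψ'c.mul ((hfd.comp hψ.continuous).pow 2)) h1.mul_left
    · simp only [hgd]
      have := hψ'b x
      have h0 : 0 ≤ ψ' x * deriv f (ψ x) ^ 2 := mul_nonneg (by linarith) (sq_nonneg _)
      calc (deriv f (ψ x) * ψ' x) ^ 2 = ψ' x * (ψ' x * deriv f (ψ x) ^ 2) := by ring
        _ ≤ _ := mul_le_mul_of_nonneg_right this.2 h0
  have hN' : N ≤ (1 + K * θ) * ∫ x, g x ^ 2 := by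
    rw [hN, hcv (fun x => f x ^ 2), ← integral_const_mul]
    refine integral_mono ?_ ?_ (fun x => ?_)
    · have h1 := hcomp _ (hsqc _ hfc)
      exact Continuous.integrable_of_hasCompactSupport
        (hψ'c.mul ((hf1.continuous.comp hψ.continuous).pow 2)) h1.mul_left
    · exact Integrable.const_mul (Continuous.integrable_of_hasCompactSupport
        (hg1.continuous.pow 2) (hsqc _ hgc)) _
    · exact mul_le_mul_of_nonneg_right (hψ'b x).2 (sq_nonneg _)
  set κ := θ * C + 2 * √(c * C * θ) with hκ
  have hκnn : 0 ≤ κ := by positivity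
  have hpt : ∀ x, |x| ≤ c → g x ^ 2 ≤ f x ^ 2 + κ * A := by
    intro x hx
    have h1 : (g x - f x) ^ 2 ≤ θ * C * A :=
      (sq_sub_le_abs hf1 hfc x (ψ x)).trans (mul_le_mul_of_nonneg_right (hψclose x) hAnn)
    have h2 : f x ^ 2 ≤ c * A := by
      have h := sq_sub_le_abs hf1 hfc 0 x
      rw [hfzero 0 (by rw [abs_zero]; exact mul_pos (by linarith) hs), sub_zero, sub_zero] at h
      exact h.trans (mul_le_mul_of_nonneg_right hx hAnn)
    have h3 : f x * (g x - f x) ≤ √(c * C * θ) * A := by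
      have : (f x * (g x - f x)) ^ 2 ≤ (c * C * θ) * A ^ 2 := by
        rw [mul_pow]
        calc _ ≤ (c * A) * (θ * C * A) := mul_le_mul h2 h1 (sq_nonneg _) (by positivity)
          _ = _ := by ring
      have h := (le_abs_self _).trans (Real.abs_le_sqrt this)
      rwa [Real.sqrt_mul (by positivity), Real.sqrt_sq hAnn] at h
    rw [hκ]
    nlinarith
  have hB' : ∫ x, V x * g x ^ 2 ≤ B + M * (κ * A) := by
    have hind : Integrable (fun x => (Icc (-c) c).indicator V x * (κ * A)) :=
      (hVc.integrable_indicator measurableSet_Icc).mul_const _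
    rw [hB, hM, ← integral_indicator measurableSet_Icc, ← integral_mul_const,
      ← integral_add (hIV f hf1 hfc) hind]
    refine integral_mono_ae (hIV g hg1 hgc) ((hIV f hf1 hfc).add hind) ?_
    filter_upwards [hpos] with x hx
    by_cases hxc : |x| ≤ c
    · rw [indicator_of_mem (show x ∈ Icc (-c) c from abs_le.1 hxc)]
      nlinarith [mul_le_mul_of_nonneg_left (hpt x hxc) hx]
    · have h0 : η x = 0 := hη0 x (not_le.1 hxc).le
      have hgx : g x = f x := by simp [g, ψ, h0]
      have hni : x ∉ Icc (-c) c := fun h => hxc (abs_le.2 h)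
      rw [indicator_of_notMem hni, hgx]
      simp
  have hN'pos : 0 < ∫ x, g x ^ 2 := by
    by_contra h
    have : (1 + K * θ) * ∫ x, g x ^ 2 ≤ 0 := mul_nonpos_of_nonneg_of_nonpos (by positivity) (not_lt.1 h)
    linarith
  unfold rayleigh
  rw [integral_add (hIA g hg1 hgc) (hIV g hg1 hgc), integral_add (hIA f hf1 hfc) (hIV f hf1 hfc),
    ← hA, ← hB, ← hN, div_le_iff₀ hN'pos]
  have hKθ0 : 0 ≤ K * θ := by positivity
  have hMκ : 0 ≤ M * κ := by positivity
  calc _ ≤ (1 + K * θ) * A + (B + M * (κ * A)) := add_le_add hA' hB'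
    _ ≤ (1 + K * θ + M * κ) * (A + B) := by nlinarith [mul_nonneg hKθ0 hBnn, mul_nonneg hMκ hBnn]
    _ = (1 + K * θ + M * κ) * ((A + B) / N) * N := by field_simp
    _ ≤ (1 + K * θ + M * κ) * ((A + B) / N) * ((1 + K * θ) * ∫ x, g x ^ 2) :=
        mul_le_mul_of_nonneg_left hN' (by positivity)
    _ = _ := by ring

lemma lambdaV_mono (V : ℝ → ℝ) : Monotone (fun R : ℝ => lambdaV V {x : ℝ | R ≤ |x|}) := by
  intro r s hrs
  refine sInf_le_sInf ?_
  rintro e ⟨f, ⟨h1, h2, h3, h4⟩, he⟩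
  exact ⟨f, ⟨h1, h2, h3, h4.trans fun x (hx : s ≤ |x|) => hrs.trans hx⟩, he⟩

lemma lambdaV_le_mul (V : ℝ → ℝ)
    (hloc : LocallyIntegrable V) (hpos : ∀ᵐ x ∂(volume : Measure ℝ), 0 ≤ V x)
    (b : ℝ) (hb : 0 < b) :
    ∃ (K : ℝ) (W : ℝ → ℝ), 0 < K ∧ Continuous W ∧ W 0 = 1 ∧
      ∀ θ s : ℝ, 0 ≤ θ → θ < 1 → K * θ ≤ 1 / 2 → 0 < W θ → 0 < s → s ≤ b →
        lambdaV V {x : ℝ | s ≤ |x|} ≤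
          ENNReal.ofReal (W θ) * lambdaV V {x : ℝ | (1 - θ) * s ≤ |x|} := by
  obtain ⟨K, W, hK, hW, hW0, H⟩ := transplant V hloc hpos b hb
  refine ⟨K, W, hK, hW, hW0, fun θ s h1 h2 h3 hWθ h4 h5 => ?_⟩
  rw [mul_comm, ← ENNReal.div_le_iff (by simpa using hWθ) ENNReal.ofReal_ne_top]
  refine le_sInf ?_
  rintro e ⟨f, hf, rfl⟩
  obtain ⟨hWnn, g, hg, hle⟩ := H θ s h1 h2 h3 h4 h5 f hf
  rw [ENNReal.div_le_iff (by simpa using hWθ) ENNReal.ofReal_ne_top, mul_comm,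
    ← ENNReal.ofReal_mul hWnn]
  have h6 : lambdaV V {x : ℝ | s ≤ |x|} ≤ ENNReal.ofReal (rayleigh V g) := sInf_le ⟨g, hg, rfl⟩
  exact h6.trans (ENNReal.ofReal_le_ofReal hle)

/-- **Lemma 3.3 for `G = H = ℝ`.** The map `R ↦ λ_V({|x| ≥ R})` is monotonically
nondecreasing and continuous on `(0,∞)`, and its supremum over `R > 0`, equivalently its
limit as `R → ∞`, equals `Σ_V`. -/
theorem lambda_exterior_monotone_continuous (V : ℝ → ℝ) (hmeas : Measurable V)
    (hloc : LocallyIntegrable V) (hpos : ∀ᵐ x ∂(volume : Measure ℝ), 0 ≤ V x) :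
    MonotoneOn (fun R : ℝ => lambdaV V {x : ℝ | R ≤ |x|}) (Set.Ioi 0) ∧
    ContinuousOn (fun R : ℝ => lambdaV V {x : ℝ | R ≤ |x|}) (Set.Ioi 0) ∧
    (⨆ R : ℝ, ⨆ _ : 0 < R, lambdaV V {x : ℝ | R ≤ |x|}) = SigmaV V ∧
    Tendsto (fun R : ℝ => lambdaV V {x : ℝ | R ≤ |x|}) atTop (𝓝 (SigmaV V)) := by
  have hmono := lambdaV_mono V
  refine ⟨hmono.monotoneOn _, ?_, rfl, ?_⟩
  · intro R hR
    have hR : 0 < R := hR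
    apply ContinuousAt.continuousWithinAt
    obtain ⟨K, W, hK, hW, hW0, H⟩ := lambdaV_le_mul V hloc hpos (2 * R) (by linarith)
    let t : ℝ → ℝ := fun s => 1 - min s R / max s R
    have ht : ContinuousAt t R := by
      have : max R R ≠ 0 := by simpa using hR.ne'
      fun_prop (disch := assumption)
    have htR : t R = 0 := by simp [t, hR.ne']
    have hWt : Tendsto (fun s => W (t s)) (𝓝 R) (𝓝 1) := by
      have h := (hW.continuousAt (x := t R)).tendsto.comp ht.tendsto
      rwa [htR, hW0] at h
    have ht0 : Tendsto t (𝓝 R) (𝓝 0) := by simpa [htR] using ht.tendsto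
    have hE : Tendsto (fun s => ENNReal.ofReal (W (t s))) (𝓝 R) (𝓝 1) := by
      simpa using ENNReal.tendsto_ofReal hWt
    have key : ∀ᶠ s in 𝓝 R, 0 < W (t s) ∧ lambdaV V {x : ℝ | max s R ≤ |x|} ≤
        ENNReal.ofReal (W (t s)) * lambdaV V {x : ℝ | min s R ≤ |x|} := by
      have hKt : Tendsto (fun s => K * t s) (𝓝 R) (𝓝 0) := by simpa using ht0.const_mul K
      filter_upwards [hWt.eventually_const_lt one_pos, ht0.eventually_lt_const one_pos,
        hKt.eventually_lt_const (show (0 : ℝ) < 1 / 2 by norm_num),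
        eventually_gt_nhds hR, eventually_lt_nhds (show R < 2 * R by linarith)]
        with s h1 h2 h3 h4 h5
      refine ⟨h1, ?_⟩
      have hmax : 0 < max s R := lt_max_of_lt_right hR
      have h := H (t s) (max s R) ?_ h2 h3.le h1 hmax (max_le h5.le (by linarith))
      · have he : (1 - t s) * max s R = min s R := by simp only [t]; field_simp; ring
        rwa [he] at h
      · simp only [t, sub_nonneg]
        exact (div_le_one hmax).2 min_le_max
    have hup : Tendsto (fun s => ENNReal.ofReal (W (t s)) * lambdaV V {x : ℝ | R ≤ |x|})
        (𝓝 R) (𝓝 (lambdaV V {x : ℝ | R ≤ |x|})) := by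
      simpa using ENNReal.Tendsto.mul_const hE (b := lambdaV V {x : ℝ | R ≤ |x|})
        (Or.inl one_ne_zero)
    have hlo : Tendsto (fun s => (ENNReal.ofReal (W (t s)))⁻¹ * lambdaV V {x : ℝ | R ≤ |x|})
        (𝓝 R) (𝓝 (lambdaV V {x : ℝ | R ≤ |x|})) := by
      have hE' : Tendsto (fun s => (ENNReal.ofReal (W (t s)))⁻¹) (𝓝 R) (𝓝 1) := by
        simpa using hE.inv
      simpa using ENNReal.Tendsto.mul_const hE' (b := lambdaV V {x : ℝ | R ≤ |x|})
        (Or.inl one_ne_zero)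
    refine tendsto_of_tendsto_of_tendsto_of_le_of_le' hlo hup ?_ ?_
    · filter_upwards [key] with s hs
      have h : lambdaV V {x : ℝ | R ≤ |x|} ≤
          ENNReal.ofReal (W (t s)) * lambdaV V {x : ℝ | s ≤ |x|} :=
        (hmono (le_max_right s R)).trans (hs.2.trans (mul_le_mul_right (hmono (min_le_left s R)) _))
      rw [mul_comm, ← div_eq_mul_inv,
        ENNReal.div_le_iff (by simpa using hs.1) ENNReal.ofReal_ne_top, mul_comm]
      exact h
    · filter_upwards [key] with s hs
      exact (hmono (le_max_left s R)).trans
        (hs.2.trans (mul_le_mul_right (hmono (min_le_right s R)) _))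
  · have h := tendsto_atTop_iSup hmono
    have he : (⨆ R : ℝ, lambdaV V {x : ℝ | R ≤ |x|}) = SigmaV V := by
      unfold SigmaV
      refine le_antisymm (iSup_le fun R => ?_) (iSup_mono fun R => iSup_le fun _ => le_rfl)
      refine (hmono (le_max_left R 1)).trans ?_
      exact le_iSup₂_of_le (max R 1) (lt_max_of_lt_right one_pos) le_rfl
    rwa [he] at h
end

section
/- Let V : ℝ → ℝ be Borel measurable, locally integrable and nonnegative almost everywhere, and fix x₀ ∈ ℝ. Then the map R ↦ λ_V([x₀ − R, x₀ + R]) is monotonically nonincreasing and lower semicontinuous on (0, ∞), with λ_V([x₀ − R, x₀ + R]) < ∞ for every R > 0; moreover λ_V([x₀ − R, x₀ + R]) → +∞ as R → 0⁺, and inf_{R>0} λ_V([x₀ − R, x₀ + R]) = lim_{R→∞} λ_V([x₀ − R, x₀ + R]) = λ_V(ℝ). (This is the paper's Lemma 3.2 for the metric graph G = H = ℝ, where B_R(x₀) = [x₀ − R, x₀ + R].) -/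
open MeasureTheory Set Filter Topology
open scoped ENNReal

lemma trunc_exists (ε : ℝ) (hε : 0 < ε) : ∃ φ φ' : ℝ → ℝ, (∀ t, HasDerivAt φ (φ' t) t) ∧
    Continuous φ' ∧ (∀ t, 0 ≤ φ' t) ∧ (∀ t, φ' t ≤ 1) ∧ (∀ t, |t| ≤ ε → φ t = 0) ∧
    (∀ t, φ t ^ 2 ≤ t ^ 2) ∧ (∀ t, |t - φ t| ≤ 2 * ε) := by
  set p : ℝ → ℝ := fun u => max 0 (min 1 (|u| / ε - 1)) with hp
  have hpc : Continuous p := by fun_prop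
  have p0 : ∀ u, 0 ≤ p u := fun u => le_max_left _ _
  have p1 : ∀ u, p u ≤ 1 := fun u => max_le zero_le_one (min_le_left _ _)
  have pz : ∀ u, |u| ≤ ε → p u = 0 := by
    intro u hu
    have : |u| / ε ≤ 1 := (div_le_one hε).2 hu
    exact max_eq_left ((min_le_right _ _).trans (by linarith))
  have pone : ∀ u, 2 * ε ≤ |u| → p u = 1 := by
    intro u hu
    have : 2 ≤ |u| / ε := (le_div_iff₀ hε).2 hu
    simp only [hp]
    rw [min_eq_left (by linarith)]; simp
  set φ : ℝ → ℝ := fun t => ∫ u in (0:ℝ)..t, p u with hφ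
  have hd : ∀ t, HasDerivAt φ (p t) t := fun t => (hpc.integral_hasStrictDerivAt 0 t).hasDerivAt
  have φ0 : φ 0 = 0 := by simp [hφ]
  have hdiff : ∀ a b, φ b - φ a = ∫ u in a..b, p u := by
    intro a b
    exact intervalIntegral.integral_interval_sub_left (hpc.intervalIntegrable _ _) (hpc.intervalIntegrable _ _)
  have mono : Monotone φ := monotone_of_hasDerivAt_nonneg hd p0
  have mono2 : Monotone (fun t => t - φ t) :=
    monotone_of_hasDerivAt_nonneg (fun t => (hasDerivAt_id t).sub (hd t)) (fun t => by
      have := p1 t; simp; linarith)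
  have flat : ∀ a b, (∀ u ∈ uIcc a b, p u = 1) → φ b - φ a = b - a := by
    intro a b h
    rw [hdiff, intervalIntegral.integral_congr (g := fun _ => (1:ℝ)) h]; simp
  refine ⟨φ, p, hd, hpc, p0, p1, ?_, ?_, ?_⟩
  · intro t ht
    have : φ t = ∫ u in (0:ℝ)..t, (0:ℝ) := by
      apply intervalIntegral.integral_congr
      intro u hu
      apply pz
      rw [abs_le] at *
      rcases le_total 0 t with h | h
      · rw [uIcc_of_le h] at hu; constructor <;> linarith [hu.1, hu.2]
      · rw [uIcc_of_ge h] at hu; constructor <;> linarith [hu.1, hu.2]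
    simpa using this
  · intro t
    rcases le_total 0 t with h | h
    · have h1 := mono h; have h2 := mono2 h
      simp only [φ0] at h1 h2
      nlinarith
    · have h1 := mono h; have h2 := mono2 h
      simp only [φ0] at h1 h2
      nlinarith
  · intro t
    rw [abs_le]
    rcases le_total 0 t with h | h
    · have h1 := mono h; have h2 := mono2 h
      simp only [φ0] at h1 h2
      refine ⟨by linarith, ?_⟩
      rcases le_total t (2 * ε) with h3 | h3
      · linarith
      · have := flat (2*ε) t (fun u hu => by
          rw [uIcc_of_le h3] at hu
          exact pone u (hu.1.trans (le_abs_self u)))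
        have h4 := mono (show (0:ℝ) ≤ 2 * ε by positivity)
        linarith
    · have h1 := mono h; have h2 := mono2 h
      simp only [φ0] at h1 h2
      refine ⟨?_, by linarith⟩
      rcases le_total (-(2 * ε)) t with h3 | h3
      · linarith
      · have := flat t (-(2*ε)) (fun u hu => by
          rw [uIcc_of_le h3] at hu
          exact pone u (by linarith [neg_abs_le u, hu.2]))
        have h4 := mono (show -(2 * ε) ≤ 0 by linarith)
        linarith

lemma sq_hasCompactSupport {f : ℝ → ℝ} (h : HasCompactSupport f) :
    HasCompactSupport (fun x => f x ^ 2) :=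
  h.comp_left (g := fun y : ℝ => y ^ 2) (by simp)

lemma int_sq {f : ℝ → ℝ} (hc : Continuous f) (h : HasCompactSupport f) :
    Integrable (fun x => f x ^ 2) :=
  (hc.pow 2).integrable_of_hasCompactSupport (sq_hasCompactSupport h)

lemma int_dsq {f : ℝ → ℝ} (hc : ContDiff ℝ 1 f) (h : HasCompactSupport f) :
    Integrable (fun x => deriv f x ^ 2) :=
  int_sq (hc.continuous_deriv le_rfl) h.deriv

lemma int_V {V : ℝ → ℝ} (hloc : LocallyIntegrable V) {f : ℝ → ℝ} (hc : Continuous f)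
    (h : HasCompactSupport f) : Integrable (fun x => V x * f x ^ 2) :=
  hloc.integrable_smul_right_of_hasCompactSupport (hc.pow 2) (sq_hasCompactSupport h)

lemma pointwise {f : ℝ → ℝ} (hc : ContDiff ℝ 1 f) (h : HasCompactSupport f) {a b : ℝ}
    (hab : a ≤ b) : (f b - f a) ^ 2 ≤ (b - a) * ∫ x, deriv f x ^ 2 := by
  rcases hab.eq_or_lt with rfl | hlt
  · simp
  have hdc := hc.continuous_deriv le_rfl
  have hF : ∫ x in a..b, deriv f x = f b - f a :=
    intervalIntegral.integral_deriv_eq_sub (fun x _ => hc.differentiable one_ne_zero x)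
      (hdc.intervalIntegrable _ _)
  have h1 : ∫ x in a..b, deriv f x ^ 2 ≤ ∫ x, deriv f x ^ 2 := by
    rw [intervalIntegral.integral_of_le hab]
    exact setIntegral_le_integral (int_dsq hc h) (Eventually.of_forall fun x => sq_nonneg _)
  set t := (f b - f a) / (b - a) with ht
  have hba : 0 < b - a := by linarith
  have h2 : 0 ≤ ∫ x in a..b, (deriv f x ^ 2 - 2 * t * deriv f x + t ^ 2) :=
    intervalIntegral.integral_nonneg hab (fun x _ => by nlinarith [sq_nonneg (deriv f x - t)])
  rw [intervalIntegral.integral_add, intervalIntegral.integral_sub,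
    intervalIntegral.integral_const_mul, hF, intervalIntegral.integral_const, smul_eq_mul] at h2
  · have h3 : t * (b - a) = f b - f a := by rw [ht]; field_simp
    have h4 : (f b - f a) ^ 2 = (b - a) * (t ^ 2 * (b - a)) := by rw [← h3]; ring
    rw [h4]
    apply mul_le_mul_of_nonneg_left _ hba.le
    rw [← h3] at h2
    nlinarith
  all_goals exact Continuous.intervalIntegrable (by fun_prop) _ _

lemma zero_out {S : Set ℝ} {f : ℝ → ℝ} (h : TestFor S f) {x : ℝ} (hx : x ∉ S) : f x = 0 :=
  image_eq_zero_of_notMem_tsupport fun h' => hx (h.2.2.2 h')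

lemma N_pos {S : Set ℝ} {f : ℝ → ℝ} (h : TestFor S f) : 0 < ∫ x, f x ^ 2 := by
  obtain ⟨x, hx⟩ := Function.ne_iff.1 h.2.1
  exact (h.1.continuous.pow 2).integral_pos_of_hasCompactSupport_nonneg_nonzero
    (sq_hasCompactSupport h.2.2.1) (fun x => sq_nonneg _) (x := x) (by simpa using hx)

lemma D_le {V : ℝ → ℝ} (hloc : LocallyIntegrable V)
    (hpos : ∀ᵐ x ∂(volume : Measure ℝ), 0 ≤ V x) {S : Set ℝ} {f : ℝ → ℝ} (h : TestFor S f) :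
    ∫ x, deriv f x ^ 2 ≤ ∫ x, (deriv f x ^ 2 + V x * f x ^ 2) := by
  apply integral_mono_ae (int_dsq h.1 h.2.2.1)
    ((int_dsq h.1 h.2.2.1).add (int_V hloc h.1.continuous h.2.2.1))
  filter_upwards [hpos] with x hx
  have := mul_nonneg hx (sq_nonneg (f x))
  simp; linarith

lemma lambda_le {V : ℝ → ℝ} {S : Set ℝ} {f : ℝ → ℝ} (h : TestFor S f) :
    lambdaV V S ≤ ENNReal.ofReal (rayleigh V f) := sInf_le ⟨f, h, rfl⟩

lemma lambda_anti (V : ℝ → ℝ) {S T : Set ℝ} (h : S ⊆ T) : lambdaV V T ≤ lambdaV V S := by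
  apply sInf_le_sInf
  rintro e ⟨f, hf, rfl⟩
  exact ⟨f, ⟨hf.1, hf.2.1, hf.2.2.1, hf.2.2.2.trans h⟩, rfl⟩

lemma ball_mono (x₀ : ℝ) {R R' : ℝ} (h : R ≤ R') :
    Icc (x₀ - R) (x₀ + R) ⊆ Icc (x₀ - R') (x₀ + R') :=
  Icc_subset_Icc (by linarith) (by linarith)

lemma small_out {x₀ R δ : ℝ} (hδ : 0 ≤ δ) {f : ℝ → ℝ}
    (h : TestFor (Icc (x₀ - (R + δ)) (x₀ + (R + δ))) f) {x : ℝ}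
    (hx : x ∉ Icc (x₀ - R) (x₀ + R)) : f x ^ 2 ≤ 2 * δ * ∫ y, deriv f y ^ 2 := by
  have hD : 0 ≤ ∫ y, deriv f y ^ 2 := integral_nonneg fun _ => sq_nonneg _
  by_cases hx2 : x ∈ Icc (x₀ - (R + δ)) (x₀ + (R + δ))
  swap
  · rw [zero_out h hx2]; simp; positivity
  rcases hδ.eq_or_lt with rfl | hδ'
  · simp at hx2 hx; linarith [hx hx2.1]
  rw [mem_Icc, not_and_or, not_le, not_le] at hx
  rcases hx with hx | hx
  · have hz : f (x - 2 * δ) = 0 := zero_out h (fun h' => by linarith [h'.1])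
    have := pointwise h.1 h.2.2.1 (show x - 2 * δ ≤ x by linarith)
    rw [hz] at this
    simpa using this
  · have hz : f (x + 2 * δ) = 0 := zero_out h (fun h' => by linarith [h'.2])
    have := pointwise h.1 h.2.2.1 (show x ≤ x + 2 * δ by linarith)
    rw [hz] at this
    simpa using this

lemma key {V : ℝ → ℝ} (hloc : LocallyIntegrable V)
    (hpos : ∀ᵐ x ∂(volume : Measure ℝ), 0 ≤ V x) {x₀ R δ E θ : ℝ} (hR : 0 < R) (hδ : 0 < δ)
    (hE : 0 < E) (hθ : 0 < θ) {f : ℝ → ℝ}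
    (h : TestFor (Icc (x₀ - (R + δ)) (x₀ + (R + δ))) f) (hf : rayleigh V f ≤ E)
    (hc : 0 < 1 - θ - 16 * δ * E * (R + δ) / θ) :
    lambdaV V (Icc (x₀ - R) (x₀ + R)) ≤
      ENNReal.ofReal (E / (1 - θ - 16 * δ * E * (R + δ) / θ)) := by
  have hN := N_pos h
  set N := ∫ x, f x ^ 2 with hNdef
  have hA : ∫ x, (deriv f x ^ 2 + V x * f x ^ 2) ≤ E * N := (div_le_iff₀ hN).1 hf
  have hDE := (D_le hloc hpos h).trans hA
  set ε := √(2 * δ * (E * N)) with hεdef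
  have hε : 0 < ε := Real.sqrt_pos.2 (by positivity)
  have hε2 : ε ^ 2 = 2 * δ * (E * N) := Real.sq_sqrt (by positivity)
  obtain ⟨φ, φ', hd, hcφ, h0, h1, hz, hle, hclose⟩ := trunc_exists ε hε
  set g : ℝ → ℝ := fun x => φ (f x) with hg
  have hφ0 : φ 0 = 0 := hz 0 (by simpa using hε.le)
  have hφC : ContDiff ℝ 1 φ := by
    rw [contDiff_one_iff_deriv]
    refine ⟨fun t => (hd t).differentiableAt, ?_⟩
    rwa [show deriv φ = φ' from funext fun t => (hd t).deriv]
  have hgC : ContDiff ℝ 1 g := hφC.comp h.1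
  have hgS : HasCompactSupport g := h.2.2.1.comp_left hφ0
  have hgd : ∀ x, deriv g x = φ' (f x) * deriv f x := fun x =>
    ((hd (f x)).comp x (h.1.differentiable one_ne_zero x).hasDerivAt).deriv
  have hgout : ∀ x, x ∉ Icc (x₀ - R) (x₀ + R) → g x = 0 := by
    intro x hx
    apply hz
    refine abs_le_of_sq_le_sq ?_ hε.le
    rw [hε2]
    refine (small_out hδ.le h hx).trans ?_
    gcongr
  have hgsup : tsupport g ⊆ Icc (x₀ - R) (x₀ + R) := by
    apply closure_minimal _ isClosed_Icc
    intro x hx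
    by_contra hx'
    exact hx (hgout x hx')
  -- the norm
  set c := 1 - θ - 16 * δ * E * (R + δ) / θ with hcdef
  have hNg : c * N ≤ ∫ x, g x ^ 2 := by
    set B := Icc (x₀ - (R + δ)) (x₀ + (R + δ)) with hB
    have e1 : N = ∫ x in B, f x ^ 2 :=
      (setIntegral_eq_integral_of_forall_compl_eq_zero fun x hx => by simp [zero_out h hx]).symm
    have e2 : ∫ x, g x ^ 2 = ∫ x in B, g x ^ 2 :=
      (setIntegral_eq_integral_of_forall_compl_eq_zero fun x hx => by
        simp [hg, zero_out h hx, hφ0]).symm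
    have i1 : IntegrableOn (fun x => f x ^ 2) B := (int_sq h.1.continuous h.2.2.1).integrableOn
    have i2 : IntegrableOn (fun _ : ℝ => 4 * ε ^ 2 / θ) B := by
      apply Continuous.integrableOn_Icc; fun_prop
    have e3 : ∫ x in B, ((1 - θ) * f x ^ 2 - 4 * ε ^ 2 / θ) ≤ ∫ x in B, g x ^ 2 := by
      apply integral_mono ((i1.const_mul _).sub i2) (int_sq hgC.continuous hgS).integrableOn
      intro x
      simp only [hg]
      set t := f x
      have hcl := hclose t
      have hs : (t - φ t) ^ 2 ≤ (2 * ε) ^ 2 := by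
        rw [sq_le_sq, abs_of_pos (by positivity : 0 < 2 * ε)]; exact hcl
      have hs2 : (1 - θ) * t ^ 2 - (t - φ t) ^ 2 / θ ≤ φ t ^ 2 := by
        have : 0 ≤ (θ * t - (t - φ t)) ^ 2 / θ := by positivity
        have e : (θ * t - (t - φ t)) ^ 2 / θ
            = θ * t ^ 2 - 2 * t * (t - φ t) + (t - φ t) ^ 2 / θ := by
          field_simp; ring
        nlinarith [sq_nonneg (t - φ t)]
      have hs3 : (t - φ t) ^ 2 / θ ≤ 4 * ε ^ 2 / θ := by
        gcongr; linarith
      change (1 - θ) * t ^ 2 - 4 * ε ^ 2 / θ ≤ φ t ^ 2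
      linarith
    rw [integral_sub (i1.const_mul _) i2, integral_const_mul, ← e1, ← e2] at e3
    simp only [hB, integral_const, measureReal_restrict_apply_univ, Real.volume_real_Icc, smul_eq_mul] at e3
    rw [max_eq_left (by linarith), hε2] at e3
    refine le_trans (le_of_eq ?_) e3
    rw [hcdef]; field_simp; ring
  have hgN : 0 < ∫ x, g x ^ 2 := lt_of_lt_of_le (by positivity) hNg
  have hgne : g ≠ 0 := by
    intro h0
    rw [h0] at hgN; simp at hgN
  have hgT : TestFor (Icc (x₀ - R) (x₀ + R)) g := ⟨hgC, hgne, hgS, hgsup⟩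
  have hAg : ∫ x, (deriv g x ^ 2 + V x * g x ^ 2) ≤ ∫ x, (deriv f x ^ 2 + V x * f x ^ 2) := by
    apply integral_mono_ae ((int_dsq hgC hgS).add (int_V hloc hgC.continuous hgS))
      ((int_dsq h.1 h.2.2.1).add (int_V hloc h.1.continuous h.2.2.1))
    filter_upwards [hpos] with x hx
    simp only [Pi.add_apply]
    apply add_le_add
    · rw [hgd, mul_pow]
      have : φ' (f x) ^ 2 ≤ 1 := pow_le_one₀ (h0 _) (h1 _)
      nlinarith [sq_nonneg (deriv f x)]
    · exact mul_le_mul_of_nonneg_left (hle _) hx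
  refine (lambda_le hgT).trans (ENNReal.ofReal_le_ofReal ?_)
  rw [rayleigh, div_le_div_iff₀ hgN hc]
  have := hAg.trans hA
  nlinarith

lemma rayleigh_lower {V : ℝ → ℝ} (hloc : LocallyIntegrable V)
    (hpos : ∀ᵐ x ∂(volume : Measure ℝ), 0 ≤ V x) {x₀ R : ℝ} (hR : 0 < R) {f : ℝ → ℝ}
    (h : TestFor (Icc (x₀ - R) (x₀ + R)) f) : 1 / (8 * R ^ 2) ≤ rayleigh V f := by
  have hN := N_pos h
  have hD := D_le hloc hpos h
  rw [rayleigh, div_le_div_iff₀ (by positivity) hN]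
  have e1 : ∫ x, f x ^ 2 = ∫ x in Icc (x₀ - R) (x₀ + R), f x ^ 2 :=
    (setIntegral_eq_integral_of_forall_compl_eq_zero fun x hx => by simp [zero_out h hx]).symm
  have e2 : ∫ x in Icc (x₀ - R) (x₀ + R), f x ^ 2 ≤
      ∫ x in Icc (x₀ - R) (x₀ + R), 4 * R * ∫ y, deriv f y ^ 2 := by
    apply setIntegral_mono_on (int_sq h.1.continuous h.2.2.1).integrableOn
      (Continuous.integrableOn_Icc (by fun_prop)) measurableSet_Icc
    intro x hx
    have hz : f (x - 4 * R) = 0 := zero_out h (fun h' => by linarith [h'.1, hx.2])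
    have := pointwise h.1 h.2.2.1 (show x - 4 * R ≤ x by linarith)
    rw [hz] at this
    simpa using this
  simp only [integral_const, measureReal_restrict_apply_univ, Real.volume_real_Icc, smul_eq_mul] at e2
  rw [max_eq_left (by linarith)] at e2
  rw [e1]
  nlinarith [mul_le_mul_of_nonneg_left hD (show 0 ≤ 8 * R ^ 2 by positivity)]

lemma lsc_right {V : ℝ → ℝ} (hloc : LocallyIntegrable V)
    (hpos : ∀ᵐ x ∂(volume : Measure ℝ), 0 ≤ V x) {x₀ R : ℝ} (hR : 0 < R) {y : ℝ≥0∞}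
    (hy : y < lambdaV V (Icc (x₀ - R) (x₀ + R))) :
    ∃ δ > 0, y < lambdaV V (Icc (x₀ - (R + δ)) (x₀ + (R + δ))) := by
  obtain ⟨a, hya, ha⟩ := ENNReal.lt_iff_exists_nnreal_btwn.1 hy
  obtain ⟨b, hab, hb⟩ := ENNReal.lt_iff_exists_nnreal_btwn.1 ha
  have ha0 : (0:ℝ) < a := by
    have := lt_of_le_of_lt (zero_le : 0 ≤ y) hya
    exact_mod_cast this
  have hab' : (a:ℝ) < b := by exact_mod_cast hab
  set K : ℝ := 1 + 16 * a * (R + 1) with hK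
  have hlim : Tendsto (fun s : ℝ => (a:ℝ) / (1 - s - 16 * s * a * (R + s ^ 2))) (𝓝[>] 0) (𝓝 (a:ℝ)) := by
    have : ContinuousAt (fun s : ℝ => (a:ℝ) / (1 - s - 16 * s * a * (R + s ^ 2))) 0 := by
      apply ContinuousAt.div (by fun_prop) (by fun_prop); simp
    have h2 := this.tendsto
    simp only [mul_zero, zero_mul, sub_zero, div_one] at h2
    exact h2.mono_left nhdsWithin_le_nhds
  have hlim2 : Tendsto (fun s : ℝ => (1 - s - 16 * s * a * (R + s ^ 2))) (𝓝[>] 0) (𝓝 1) := by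
    have : ContinuousAt (fun s : ℝ => (1 - s - 16 * s * a * (R + s ^ 2))) 0 := by fun_prop
    have h2 := this.tendsto
    simp only [mul_zero, zero_mul, sub_zero] at h2
    exact h2.mono_left nhdsWithin_le_nhds
  obtain ⟨s, ⟨hs1, hs2⟩, hs0⟩ := (((hlim.eventually_lt_const hab').and
    (hlim2.eventually_const_lt zero_lt_one)).and self_mem_nhdsWithin).exists
  have hs0 : 0 < s := hs0
  refine ⟨s ^ 2, by positivity, ?_⟩
  by_contra hcon
  have hlt := lt_of_le_of_lt (not_lt.1 hcon) hya
  obtain ⟨e, ⟨f, hf, rfl⟩, he⟩ := sInf_lt_iff.1 hlt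
  have hr : rayleigh V f ≤ a := by
    rw [← ENNReal.ofReal_coe_nnreal] at he
    exact ((ENNReal.ofReal_lt_ofReal_iff ha0).1 he).le
  have heq : 1 - s - 16 * s ^ 2 * a * (R + s ^ 2) / s = 1 - s - 16 * s * a * (R + s ^ 2) := by
    field_simp
  have hk := key hloc hpos hR (by positivity : 0 < s ^ 2) ha0 hs0 hf hr (by rw [heq]; exact hs2)
  rw [heq] at hk
  have := hk.trans (ENNReal.ofReal_le_ofReal hs1.le)
  rw [ENNReal.ofReal_coe_nnreal] at this
  exact absurd hb (not_lt.2 this)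

lemma exists_test (x₀ : ℝ) {R : ℝ} (hR : 0 < R) : ∃ f, TestFor (Icc (x₀ - R) (x₀ + R)) f := by
  let b : ContDiffBump x₀ := ⟨R / 2, R, by positivity, by linarith⟩
  refine ⟨b, b.contDiff, ?_, b.hasCompactSupport, ?_⟩
  · intro h
    have := congrFun h x₀
    rw [b.one_of_mem_closedBall (by simp; exact b.rIn_pos.le)] at this
    simp at this
  · rw [b.tsupport_eq, Real.closedBall_eq_Icc]

lemma inf_eq (V : ℝ → ℝ) (x₀ : ℝ) :
    (⨅ R : {R : ℝ // 0 < R}, lambdaV V (Set.Icc (x₀ - R.1) (x₀ + R.1)))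
      = lambdaV V Set.univ := by
  apply le_antisymm
  · apply le_sInf
    rintro e ⟨f, hf, rfl⟩
    obtain ⟨r, hr⟩ := hf.2.2.1.isBounded.subset_closedBall x₀
    have hr' : tsupport f ⊆ Icc (x₀ - max r 1) (x₀ + max r 1) := by
      rw [← Real.closedBall_eq_Icc]
      exact hr.trans (Metric.closedBall_subset_closedBall (le_max_left _ _))
    exact (iInf_le _ (⟨max r 1, by positivity⟩ : {R : ℝ // 0 < R})).trans
      (lambda_le ⟨hf.1, hf.2.1, hf.2.2.1, hr'⟩)
  · exact le_iInf fun R => lambda_anti V (subset_univ _)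

/-- **Lemma 3.2 for `G = H = ℝ`.** The map `R ↦ λ_V([x₀ - R, x₀ + R])` is monotonically
nonincreasing, lower semicontinuous and finite on `(0,∞)`; it diverges to `+∞` as `R → 0⁺`,
and its infimum over `R > 0`, equivalently its limit as `R → ∞`, equals `λ_V(ℝ)`. -/
theorem lambda_ball_antitone_lsc (V : ℝ → ℝ) (hmeas : Measurable V)
    (hloc : LocallyIntegrable V) (hpos : ∀ᵐ x ∂(volume : Measure ℝ), 0 ≤ V x) (x₀ : ℝ) :
    AntitoneOn (fun R : ℝ => lambdaV V (Set.Icc (x₀ - R) (x₀ + R))) (Set.Ioi 0) ∧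
    LowerSemicontinuousOn (fun R : ℝ => lambdaV V (Set.Icc (x₀ - R) (x₀ + R))) (Set.Ioi 0) ∧
    (∀ R : ℝ, 0 < R → lambdaV V (Set.Icc (x₀ - R) (x₀ + R)) ≠ ⊤) ∧
    Tendsto (fun R : ℝ => lambdaV V (Set.Icc (x₀ - R) (x₀ + R))) (𝓝[>] 0) (𝓝 ⊤) ∧
    (⨅ R : {R : ℝ // 0 < R}, lambdaV V (Set.Icc (x₀ - R.1) (x₀ + R.1)))
      = lambdaV V Set.univ ∧
    Tendsto (fun R : ℝ => lambdaV V (Set.Icc (x₀ - R) (x₀ + R))) atTop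
      (𝓝 (lambdaV V Set.univ)) := by
  refine ⟨fun R _ R' _ h => lambda_anti V (ball_mono x₀ h), ?_, ?_, ?_, inf_eq V x₀, ?_⟩
  · intro R hR y hy
    obtain ⟨δ, hδ, hlt⟩ := lsc_right hloc hpos (show 0 < R from hR) hy
    filter_upwards [nhdsWithin_le_nhds (Iio_mem_nhds (show R < R + δ by linarith))] with R' hR'
    exact hlt.trans_le (lambda_anti V (ball_mono x₀ (le_of_lt hR')))
  · intro R hR
    obtain ⟨f, hf⟩ := exists_test x₀ hR
    exact ne_top_of_le_ne_top ENNReal.ofReal_ne_top (lambda_le hf)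
  · have hlim : Tendsto (fun R : ℝ => ENNReal.ofReal (1 / (8 * R ^ 2))) (𝓝[>] 0) (𝓝 ⊤) := by
      apply ENNReal.tendsto_ofReal_atTop.comp
      simp only [one_div]
      apply Tendsto.inv_tendsto_nhdsGT_zero
      rw [tendsto_nhdsWithin_iff]
      constructor
      · have : ContinuousAt (fun R : ℝ => 8 * R ^ 2) 0 := by fun_prop
        have h2 := this.tendsto
        simp only [ne_eq, OfNat.ofNat_ne_zero, not_false_eq_true, zero_pow, mul_zero] at h2
        exact h2.mono_left nhdsWithin_le_nhds
      · filter_upwards [self_mem_nhdsWithin] with R hR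
        have : 0 < R := hR
        simp only [mem_Ioi]; positivity
    refine tendsto_of_tendsto_of_tendsto_of_le_of_le' hlim tendsto_const_nhds ?_
      (Eventually.of_forall fun _ => le_top)
    filter_upwards [self_mem_nhdsWithin] with R hR
    apply le_sInf
    rintro e ⟨f, hf, rfl⟩
    exact ENNReal.ofReal_le_ofReal (rayleigh_lower hloc hpos hR hf)
  · rw [tendsto_order]
    constructor
    · intro a ha
      exact Eventually.of_forall fun R => ha.trans_le (lambda_anti V (subset_univ _))
    · intro a ha
      rw [← inf_eq V x₀, gt_iff_lt, iInf_lt_iff] at ha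
      obtain ⟨R, hR⟩ := ha
      filter_upwards [eventually_ge_atTop R.1] with R' hR'
      exact (lambda_anti V (ball_mono x₀ hR')).trans_lt hR
end

section
/- (Density of compactly supported functions in the weighted Sobolev space H¹(ℝ; V).) Let V : ℝ → ℝ be Borel measurable, locally integrable and nonnegative almost everywhere. Let u : ℝ → ℝ be continuously differentiable with ∫_ℝ ( u'(x)² + (1 + V(x))·u(x)² ) dx < ∞. Then for every ε > 0 there exists a continuously differentiable function w : ℝ → ℝ with compact support such that ∫_ℝ ( (u − w)'(x)² + (1 + V(x))·(u(x) − w(x))² ) dx < ε. -/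
open MeasureTheory Set Filter Topology
open scoped ENNReal

/-- **Density of compactly supported functions in `H¹(ℝ; V)`** (cf. the proof of Lemma 3.2
and [Ho19, Lemma 3.9]). Any `C¹` function of finite weighted `H¹`-norm can be approximated
in that norm by compactly supported `C¹` functions. -/
theorem density_compact_support (V : ℝ → ℝ) (hmeas : Measurable V)
    (hloc : LocallyIntegrable V) (hpos : ∀ᵐ x ∂(volume : Measure ℝ), 0 ≤ V x)
    (u : ℝ → ℝ) (hu : ContDiff ℝ 1 u)
    (hint : Integrable (fun x => (deriv u x) ^ 2 + (1 + V x) * (u x) ^ 2)) :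
    ∀ ε : ℝ, 0 < ε → ∃ w : ℝ → ℝ, ContDiff ℝ 1 w ∧ HasCompactSupport w ∧
      (∫ x, ((deriv u x - deriv w x) ^ 2 + (1 + V x) * (u x - w x) ^ 2)) < ε := by
  intro ε hε
  let b : ContDiffBump (0 : ℝ) := ⟨1, 2, by norm_num, by norm_num⟩
  obtain ⟨φ, hφ⟩ : ∃ φ : ℝ → ℝ, φ = b := ⟨_, rfl⟩
  have hφc : ContDiff ℝ 1 φ := hφ ▸ b.contDiff
  have hφs : HasCompactSupport φ := hφ ▸ b.hasCompactSupport
  have hφ0 : ∀ x, 0 ≤ φ x := fun x => hφ ▸ b.nonneg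
  have hφ1 : ∀ x, φ x ≤ 1 := fun x => hφ ▸ b.le_one
  have hφz : φ 0 = 1 := by
    rw [hφ]
    exact b.one_of_mem_closedBall (by simp [b])
  have hdc : Continuous (deriv φ) := hφc.continuous_deriv le_rfl
  obtain ⟨C, hC⟩ := hdc.bounded_above_of_compact_support hφs.deriv
  have hud : Differentiable ℝ u := hu.differentiable (by norm_num)
  have hudc : Continuous (deriv u) := hu.continuous_deriv le_rfl
  have hφd : Differentiable ℝ φ := hφc.differentiable (by norm_num)
  let c : ℕ → ℝ := fun n => 1 / ((n : ℝ) + 1)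
  have hc0 : ∀ n, 0 < c n := fun n => by positivity
  have hc1 : ∀ n, c n ≤ 1 := fun n => by
    simp only [c]
    rw [div_le_one (by positivity)]
    have : (0 : ℝ) ≤ n := Nat.cast_nonneg n
    linarith
  have hct : Tendsto c atTop (𝓝 0) := tendsto_one_div_add_atTop_nhds_zero_nat
  let w : ℕ → ℝ → ℝ := fun n x => φ (c n * x) * u x
  have hwc : ∀ n, ContDiff ℝ 1 (w n) := fun n =>
    (hφc.comp (contDiff_const.mul contDiff_id)).mul hu
  have hws : ∀ n, HasCompactSupport (w n) := fun n => by
    have h1 : HasCompactSupport (fun x => φ (c n * x)) :=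
      hφs.comp_homeomorph (Homeomorph.mulLeft₀ (c n) (hc0 n).ne')
    exact h1.mul_right
  have hwd : ∀ n x, deriv (w n) x = (deriv φ (c n * x) * c n) * u x + φ (c n * x) * deriv u x := by
    intro n x
    have h1 : HasDerivAt (fun x => c n * x) (c n) x := by
      simpa using (hasDerivAt_id x).const_mul (c n)
    have h2 : HasDerivAt (fun x => φ (c n * x)) (deriv φ (c n * x) * c n) x :=
      HasDerivAt.comp x (hφd (c n * x)).hasDerivAt h1
    exact (h2.mul (hud x).hasDerivAt).deriv
  have key : Tendsto (fun n => ∫ x, ((deriv u x - deriv (w n) x) ^ 2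
      + (1 + V x) * (u x - w n x) ^ 2)) atTop (𝓝 (∫ _ : ℝ, (0 : ℝ))) := by
    refine tendsto_integral_of_dominated_convergence
      (fun x => (2 + 2 * C ^ 2) * ((deriv u x) ^ 2 + (1 + V x) * (u x) ^ 2)) ?_
      (hint.const_mul _) ?_ ?_
    · intro n
      have h1 : Measurable (deriv (w n)) := measurable_deriv _
      have h2 : Measurable (w n) := (hwc n).continuous.measurable
      have h3 : Measurable u := hu.continuous.measurable
      have h4 : Measurable (deriv u) := measurable_deriv _
      exact (((h4.sub h1).pow_const 2).add
        ((measurable_const.add hmeas).mul ((h3.sub h2).pow_const 2))).aestronglyMeasurable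
    · intro n
      filter_upwards [hpos] with x hx
      rw [Real.norm_of_nonneg (by positivity), hwd]
      simp only [w]
      have hb : (deriv φ (c n * x) * c n) ^ 2 ≤ C ^ 2 := by
        apply sq_le_sq'
        all_goals
          have h1 := hC (c n * x)
          have h2 : |deriv φ (c n * x) * c n| ≤ C := by
            rw [abs_mul, abs_of_pos (hc0 n)]
            rw [Real.norm_eq_abs] at h1
            calc _ ≤ |deriv φ (c n * x)| * 1 :=
                  mul_le_mul_of_nonneg_left (hc1 n) (abs_nonneg _)
              _ ≤ C := by linarith
          have := abs_le.mp h2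
          linarith [this.1, this.2]
      have hp0 := hφ0 (c n * x)
      have hp1 := hφ1 (c n * x)
      generalize deriv φ (c n * x) * c n = d at *
      generalize φ (c n * x) = p at *
      generalize deriv u x = a at *
      generalize u x = y at *
      have hq : (1 - p) ^ 2 ≤ 1 := by nlinarith
      have e1 : (a - (d * y + p * a)) ^ 2 ≤ 2 * a ^ 2 + 2 * C ^ 2 * y ^ 2 := by
        have i1 : (1 - p) ^ 2 * a ^ 2 ≤ 1 * a ^ 2 :=
          mul_le_mul_of_nonneg_right hq (sq_nonneg a)
        have i2 : d ^ 2 * y ^ 2 ≤ C ^ 2 * y ^ 2 :=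
          mul_le_mul_of_nonneg_right hb (sq_nonneg y)
        nlinarith [sq_nonneg ((1 - p) * a + d * y)]
      have e2 : (1 + V x) * (y - p * y) ^ 2 ≤ (1 + V x) * y ^ 2 := by
        apply mul_le_mul_of_nonneg_left _ (by linarith)
        have i1 : (1 - p) ^ 2 * y ^ 2 ≤ 1 * y ^ 2 :=
          mul_le_mul_of_nonneg_right hq (sq_nonneg y)
        nlinarith
      have f1 : 0 ≤ C ^ 2 * a ^ 2 := by positivity
      have f2 : 0 ≤ V x * y ^ 2 := by positivity
      have f3 : 0 ≤ C ^ 2 * (V x * y ^ 2) := by positivity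
      have f4 : 0 ≤ y ^ 2 := by positivity
      nlinarith
    · refine Eventually.of_forall fun x => ?_
      have hcx : Tendsto (fun n => c n * x) atTop (𝓝 0) := by
        simpa using hct.mul_const x
      have t1 : Tendsto (fun n => φ (c n * x)) atTop (𝓝 1) := by
        have := (hφc.continuous.tendsto 0).comp hcx
        rwa [hφz] at this
      have t2 : Tendsto (fun n => deriv φ (c n * x)) atTop (𝓝 (deriv φ 0)) :=
        (hdc.tendsto 0).comp hcx
      have t3 := ((t2.mul hct).mul_const (u x)).add (t1.mul_const (deriv u x))
      have t4 := ((t3.const_sub (deriv u x)).pow 2).add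
        ((((t1.mul_const (u x)).const_sub (u x)).pow 2).const_mul (1 + V x))
      simp only [hwd, w]
      simpa using t4
  rw [integral_zero] at key
  obtain ⟨n, hn⟩ := (key.eventually (gt_mem_nhds hε)).exists
  exact ⟨w n, hwc n, hws n, hn⟩
end

section
/- (Upper semicontinuity of the infimum of the Rayleigh quotient under form-norm approximation of domains; first half of the paper's Lemma A.3.) Let W and H be real Hilbert spaces and let ι : W → H be an injective continuous linear map with ‖ι u‖_H ≤ ‖u‖_W for all u ∈ W. For a subspace D ⊆ W define λ(D) := inf { (‖u‖_W² − ‖ι u‖_H²) / ‖ι u‖_H² : u ∈ D, u ≠ 0 } ∈ [0, ∞] (with inf ∅ = ∞). Let D ⊆ W and D_n ⊆ W (n ∈ ℕ) be subspaces such that for every u ∈ D there exists a sequence (u_n) with u_n ∈ D_n for each n and ‖u_n − u‖_W → 0. Then limsup_{n→∞} λ(D_n) ≤ λ(D). -/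
open Filter Topology
open scoped ENNReal

/-- The infimum of the Rayleigh quotient `(‖u‖_W² - ‖ι u‖_H²) / ‖ι u‖_H²` over nonzero
elements of the subspace `D ⊆ W`, with `inf ∅ = ∞`. Here `‖u‖_W² = a(u) + ‖ι u‖_H²` for a
closed nonnegative form `a`, so this is the infimum of the spectrum on the domain `D`. -/
noncomputable def lamD {W H : Type*} [NormedAddCommGroup W] [InnerProductSpace ℝ W]
    [NormedAddCommGroup H] [InnerProductSpace ℝ H]
    (ι : W →L[ℝ] H) (D : Submodule ℝ W) : ℝ≥0∞ :=
  sInf {e : ℝ≥0∞ | ∃ u ∈ D, u ≠ 0 ∧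
    e = ENNReal.ofReal ((‖u‖ ^ 2 - ‖ι u‖ ^ 2) / ‖ι u‖ ^ 2)}

/-- **First half of Lemma A.3 (abstract form).** If every `u ∈ D` can be approximated in
form norm by elements `u_n ∈ D_n`, then `limsup_n λ(D_n) ≤ λ(D)`. -/
theorem limsup_lamD_le {W H : Type*} [NormedAddCommGroup W] [InnerProductSpace ℝ W]
    [CompleteSpace W] [NormedAddCommGroup H] [InnerProductSpace ℝ H] [CompleteSpace H]
    (ι : W →L[ℝ] H) (hinj : Function.Injective ι) (hcontr : ∀ u : W, ‖ι u‖ ≤ ‖u‖)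
    (D : Submodule ℝ W) (Dn : ℕ → Submodule ℝ W)
    (happrox : ∀ u ∈ D, ∃ v : ℕ → W, (∀ n, v n ∈ Dn n) ∧
      Tendsto (fun n => ‖v n - u‖) atTop (𝓝 0)) :
    Filter.limsup (fun n => lamD ι (Dn n)) atTop ≤ lamD ι D := by
  refine le_sInf ?_
  rintro e ⟨u, hu, hu0, rfl⟩
  obtain ⟨v, hv, hlim⟩ := happrox u hu
  have hvu : Tendsto v atTop (𝓝 u) := tendsto_iff_norm_sub_tendsto_zero.mpr hlim
  have hι0 : ‖ι u‖ ^ 2 ≠ 0 := by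
    have h : ι u ≠ 0 := fun h => hu0 (hinj (by rw [h, map_zero]))
    exact pow_ne_zero _ (norm_ne_zero_iff.mpr h)
  have h1 : Tendsto (fun n => ‖ι (v n)‖ ^ 2) atTop (𝓝 (‖ι u‖ ^ 2)) :=
    (((ι.continuous.tendsto u).comp hvu).norm).pow 2
  have h2 : Tendsto (fun n => ENNReal.ofReal ((‖v n‖ ^ 2 - ‖ι (v n)‖ ^ 2) / ‖ι (v n)‖ ^ 2))
      atTop (𝓝 (ENNReal.ofReal ((‖u‖ ^ 2 - ‖ι u‖ ^ 2) / ‖ι u‖ ^ 2))) :=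
    ENNReal.tendsto_ofReal (((hvu.norm.pow 2).sub h1).div h1 hι0)
  rw [← h2.limsup_eq]
  refine Filter.limsup_le_limsup ?_
  filter_upwards [hvu.eventually_ne hu0] with n hn
  exact sInf_le ⟨v n, hv n, hn, rfl⟩
end

section
/- Consider the real line with zero potential, V ≡ 0, and let k ≥ 3. Then Δ*_k(ℝ) = 0 = Σ_0, yet every k-partition P of ℝ satisfies Δ(P) > 0. In particular, for k ≥ 3 no spectral minimal k-partition of ℝ exists, i.e. the infimum Δ*_k(ℝ) is not attained. (This is the non-existence assertion of the paper's Example 1.5(1).) -/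
open MeasureTheory Set Filter Topology
open scoped ENNReal

theorem lambda_small (ε : NNReal) (hε : 0 < ε) : ∃ L : ℝ, 0 < L ∧ ∀ (a : ℝ) (S : Set ℝ),
    Icc a (a + L) ⊆ S → lambdaV (fun _ => 0) S ≤ (ε : ℝ≥0∞) := by
  let B : ContDiffBump (1/2 : ℝ) := ⟨1/4, 1/2, by norm_num, by norm_num⟩
  obtain ⟨g, hg, hsm⟩ : ∃ g : ℝ → ℝ, g = B ∧ ContDiff ℝ 1 g := ⟨B, rfl, B.contDiff⟩
  have hsupp : ∀ x, g x ≠ 0 → x ∈ Icc (0:ℝ) 1 := by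
    intro x hx
    have h1 : x ∈ Function.support B := by rw [hg] at hx; exact hx
    rw [B.support_eq, Metric.mem_ball, Real.dist_eq, abs_lt] at h1
    have : B.rOut = 1/2 := rfl
    rw [this] at h1
    constructor <;> linarith [h1.1, h1.2]
  have hone : g (1/2) = 1 := by
    rw [hg]; exact B.one_of_mem_closedBall (Metric.mem_closedBall_self B.rIn_pos.le)
  set C : ℝ := rayleigh (fun _ => 0) g with hC
  have hε' : (0:ℝ) < ε := by exact_mod_cast hε
  have hq : 0 ≤ |C| / (ε:ℝ) := by positivity
  set L : ℝ := 1 + |C| / ε with hL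
  have hL1 : 1 ≤ L := by linarith
  have hL0 : 0 < L := by linarith
  refine ⟨L, hL0, fun a S hS => ?_⟩
  let f : ℝ → ℝ := fun x => g ((x - a) / L)
  have hfd : ∀ x, deriv f x = deriv g ((x - a) / L) / L := by
    intro x
    have h1 : HasDerivAt g (deriv g ((x - a) / L)) ((x - a) / L) :=
      (hsm.differentiable (by norm_num) _).hasDerivAt
    have h2 : HasDerivAt (fun x : ℝ => (x - a) / L) (1 / L) x :=
      ((hasDerivAt_id x).sub_const a).div_const L
    have h3 := (HasDerivAt.comp x h1 h2).deriv
    have : f = g ∘ (fun x : ℝ => (x - a) / L) := rfl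
    rw [this, h3]; ring
  have hcv : ∀ h : ℝ → ℝ, ∫ x, h ((x - a) / L) = L * ∫ x, h x := by
    intro h
    rw [integral_sub_right_eq_self (fun x => h (x / L)) a, Measure.integral_comp_div,
      abs_of_pos hL0, smul_eq_mul]
  have hray : rayleigh (fun _ => 0) f = C / L ^ 2 := by
    have e1 : ∫ x, (deriv f x) ^ 2 = L * ((∫ x, (deriv g x) ^ 2) / L ^ 2) := by
      rw [← integral_div, ← hcv]
      congr 1; ext x; rw [hfd]; ring
    have e2 : ∫ x, (f x) ^ 2 = L * ∫ x, (g x) ^ 2 := by rw [← hcv]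
    rw [hC]
    simp only [rayleigh, zero_mul, add_zero]
    rw [e1, e2, mul_div_mul_left _ _ hL0.ne']
    ring
  have hts : tsupport f ⊆ Icc a (a + L) := by
    apply closure_minimal _ isClosed_Icc
    intro x hx
    obtain ⟨h1, h2⟩ := hsupp _ hx
    rw [le_div_iff₀ hL0] at h1
    rw [div_le_iff₀ hL0] at h2
    constructor <;> linarith
  have htest : TestFor S f := by
    refine ⟨hsm.comp (by fun_prop), ?_, ?_, hts.trans hS⟩
    · intro h
      have := congrFun h (a + L / 2)
      have e : (a + L / 2 - a) / L = 1 / 2 := by field_simp; norm_num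
      simp only [f, e, hone] at this
      norm_num at this
    · exact isCompact_Icc.of_isClosed_subset (isClosed_tsupport f) hts
  have hle : lambdaV (fun _ => 0) S ≤ ENNReal.ofReal (rayleigh (fun _ => 0) f) :=
    sInf_le ⟨f, htest, rfl⟩
  refine hle.trans ?_
  rw [hray, ← ENNReal.ofReal_coe_nnreal]
  apply ENNReal.ofReal_le_ofReal
  rw [div_le_iff₀ (by positivity)]
  have h1 : |C| ≤ ε * L := by
    have : |C| = ε * (|C| / ε) := by field_simp
    rw [hL]; nlinarith
  have h2 : (ε:ℝ) * L ≤ ε * L ^ 2 := by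
    apply mul_le_mul_of_nonneg_left _ hε'.le; nlinarith
  linarith [le_abs_self C]

theorem lambda_pos (a b : ℝ) (S : Set ℝ) (hS : S ⊆ Icc a b) :
    0 < lambdaV (fun _ => 0) S := by
  set K : ℝ := 4 * (b - a) ^ 2 + 1 with hK
  have hK0 : 0 < K := by positivity
  have hpos : 0 < ENNReal.ofReal (1 / K) := by
    rw [ENNReal.ofReal_pos]; positivity
  refine hpos.trans_le (le_sInf ?_)
  rintro e ⟨f, ⟨hsm, hne, hcs, hts⟩, rfl⟩
  apply ENNReal.ofReal_le_ofReal
  have hc := hsm.continuous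
  have hc' : Continuous (deriv f) := hsm.continuous_deriv le_rfl
  have hcs' := hcs.deriv
  have i1 : Integrable (fun x => f x ^ 2) := by
    have h : Continuous (fun x => f x ^ 2) := by fun_prop
    exact h.integrable_of_hasCompactSupport (hcs.comp_left (g := fun y : ℝ => y ^ 2) (by simp))
  have i2 : Integrable (fun x => deriv f x ^ 2) := by
    have h : Continuous (fun x => deriv f x ^ 2) := by fun_prop
    exact h.integrable_of_hasCompactSupport (hcs'.comp_left (g := fun y : ℝ => y ^ 2) (by simp))
  have i3 : Integrable (fun x => f x ^ 2 + 2 * (x - a) * deriv f x * f x) := by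
    apply i1.add
    have h : Continuous (fun x => 2 * (x - a) * deriv f x * f x) := by fun_prop
    exact h.integrable_of_hasCompactSupport hcs.mul_left
  have i4 : Integrable (fun x => (x - a) * f x * f x) := by
    have h : Continuous (fun x => (x - a) * f x * f x) := by fun_prop
    exact h.integrable_of_hasCompactSupport hcs.mul_left
  have hz : ∫ x, (f x ^ 2 + 2 * (x - a) * deriv f x * f x) = 0 := by
    apply integral_eq_zero_of_hasDerivAt_of_integrable _ i3 i4
    intro x
    have h1 : HasDerivAt f (deriv f x) x := (hsm.differentiable (by norm_num) _).hasDerivAt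
    have h2 := (((hasDerivAt_id x).sub_const a).mul h1).mul h1
    refine h2.congr_deriv ?_
    simp only [id, Pi.mul_apply]; ring
  have hle : ∫ x, f x ^ 2 / 2 ≤
      ∫ x, ((f x ^ 2 + 2 * (x - a) * deriv f x * f x) + 2 * (b - a) ^ 2 * deriv f x ^ 2) := by
    apply integral_mono (i1.div_const 2) (i3.add (i2.const_mul _))
    intro x
    change f x ^ 2 / 2 ≤
      (f x ^ 2 + 2 * (x - a) * deriv f x * f x) + 2 * (b - a) ^ 2 * deriv f x ^ 2
    by_cases hx : x ∈ tsupport f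
    · obtain ⟨h1, h2⟩ := hS (hts hx)
      have h3 : (x - a) ^ 2 ≤ (b - a) ^ 2 := by
        apply pow_le_pow_left₀ <;> linarith
      nlinarith [sq_nonneg (f x + 2 * (x - a) * deriv f x),
        mul_le_mul_of_nonneg_right h3 (sq_nonneg (deriv f x))]
    · have h0 : f x = 0 := image_eq_zero_of_notMem_tsupport hx
      rw [h0]; simp; positivity
  rw [integral_add i3 (i2.const_mul _), hz, integral_div, integral_const_mul] at hle
  have hnn : 0 ≤ ∫ x, deriv f x ^ 2 := integral_nonneg fun x => sq_nonneg _
  have hfp : 0 < ∫ x, f x ^ 2 := by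
    obtain ⟨x0, hx0⟩ := Function.ne_iff.mp hne
    have h : Continuous (fun x => f x ^ 2) := by fun_prop
    exact h.integral_pos_of_hasCompactSupport_nonneg_nonzero
      (hcs.comp_left (g := fun y : ℝ => y ^ 2) (by simp)) (fun x => sq_nonneg _)
      (x := x0) (pow_ne_zero 2 hx0)
  simp only [rayleigh, zero_mul, add_zero]
  rw [div_le_div_iff₀ hK0 hfp, hK]
  nlinarith

theorem not_both (k : ℕ) (G : Fin k → Set ℝ) (hG : IsPartitionR k G) (i j : Fin k)
    (hij : i ≠ j) (z : ℝ) (hi : z ∈ interior (G i)) (hj : z ∈ interior (G j)) : False :=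
  ((hG.2.2.2 i j hij ⟨interior_subset hi, interior_subset hj⟩).1).2 hi

theorem not_both_above (k : ℕ) (G : Fin k → Set ℝ) (hG : IsPartitionR k G) (i j : Fin k)
    (hij : i ≠ j) (hi : ¬ BddAbove (G i)) (hj : ¬ BddAbove (G j)) : False := by
  have key : ∀ i, ¬ BddAbove (G i) → ∃ x, ∀ z, x < z → z ∈ interior (G i) := by
    intro i hi
    obtain ⟨x, hx⟩ := (hG.2.1 i).nonempty
    refine ⟨x, fun z hz => ?_⟩
    have : Ioi x ⊆ G i := by
      intro y hy
      obtain ⟨w, hw, hyw⟩ := not_bddAbove_iff.mp hi y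
      exact (hG.2.1 i).isPreconnected.ordConnected.out hx hw ⟨le_of_lt hy, hyw.le⟩
    exact interior_maximal this isOpen_Ioi hz
  obtain ⟨x, hx⟩ := key i hi
  obtain ⟨y, hy⟩ := key j hj
  exact not_both k G hG i j hij (max x y + 1) (hx _ (by linarith [le_max_left x y]))
    (hy _ (by linarith [le_max_right x y]))

theorem not_both_below (k : ℕ) (G : Fin k → Set ℝ) (hG : IsPartitionR k G) (i j : Fin k)
    (hij : i ≠ j) (hi : ¬ BddBelow (G i)) (hj : ¬ BddBelow (G j)) : False := by
  have key : ∀ i, ¬ BddBelow (G i) → ∃ x, ∀ z, z < x → z ∈ interior (G i) := by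
    intro i hi
    obtain ⟨x, hx⟩ := (hG.2.1 i).nonempty
    refine ⟨x, fun z hz => ?_⟩
    have : Iio x ⊆ G i := by
      intro y hy
      obtain ⟨w, hw, hyw⟩ := not_bddBelow_iff.mp hi y
      exact (hG.2.1 i).isPreconnected.ordConnected.out hw hx ⟨hyw.le, le_of_lt hy⟩
    exact interior_maximal this isOpen_Iio hz
  obtain ⟨x, hx⟩ := key i hi
  obtain ⟨y, hy⟩ := key j hj
  exact not_both k G hG i j hij (min x y - 1) (hx _ (by linarith [min_le_left x y]))
    (hy _ (by linarith [min_le_right x y]))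

theorem exists_bdd (k : ℕ) (hk : 3 ≤ k) (G : Fin k → Set ℝ) (hG : IsPartitionR k G) :
    ∃ i, BddAbove (G i) ∧ BddBelow (G i) := by
  by_contra hcon
  push Not at hcon
  have a := not_both_above k G hG
  have b := not_both_below k G hG
  let i0 : Fin k := ⟨0, by omega⟩
  let i1 : Fin k := ⟨1, by omega⟩
  let i2 : Fin k := ⟨2, by omega⟩
  have h01 : i0 ≠ i1 := by simp [i0, i1]
  have h02 : i0 ≠ i2 := by simp [i0, i2]
  have h12 : i1 ≠ i2 := by simp [i1, i2]
  have c0 := hcon i0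
  have c1 := hcon i1
  have c2 := hcon i2
  have a01 := a _ _ h01
  have a02 := a _ _ h02
  have a12 := a _ _ h12
  have b01 := b _ _ h01
  have b02 := b _ _ h02
  have b12 := b _ _ h12
  tauto

theorem part_std (k : ℕ) (L : ℝ) (hL : 0 < L) :
    IsPartitionR k (fun i => Icc ((i : ℕ) * L) ((i : ℕ) * L + L)) := by
  refine ⟨fun i => isClosed_Icc, fun i => isConnected_Icc (by linarith), fun i => ?_, ?_⟩
  · rw [interior_Icc]; exact nonempty_Ioo.mpr (by linarith)
  · have key : ∀ i j : Fin k, i < j → ∀ x : ℝ, x ∈ Icc ((i : ℕ) * L) ((i : ℕ) * L + L) →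
        x ∈ Icc ((j : ℕ) * L) ((j : ℕ) * L + L) → x = (i : ℕ) * L + L ∧ x = (j : ℕ) * L := by
      intro i j hij x hx hy
      have h : (((i : ℕ) : ℝ) + 1) ≤ ((j : ℕ) : ℝ) := by exact_mod_cast hij
      have h2 := mul_le_mul_of_nonneg_right h hL.le
      obtain ⟨p, q⟩ := hx
      obtain ⟨r, s⟩ := hy
      constructor <;> linarith
    rintro i j hij x ⟨hx, hy⟩
    dsimp only at hx hy ⊢
    rw [frontier_Icc (by linarith), frontier_Icc (by linarith)]
    rcases lt_or_gt_of_ne hij with h | h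
    · obtain ⟨p, q⟩ := key i j h x hx hy
      exact ⟨Or.inr p, Or.inl q⟩
    · obtain ⟨p, q⟩ := key j i h x hy hx
      exact ⟨Or.inl q, Or.inr p⟩

/-- **Example 1.5(1), non-existence part.** For the free Laplacian (`V ≡ 0`) on `ℝ` and any
`k ≥ 3`, one has `Δ*_k(ℝ) = 0 = Σ_0`, yet every `k`-partition has strictly positive energy;
hence no spectral minimal `k`-partition exists. -/
theorem free_line_no_minimal_partition (k : ℕ) (hk : 3 ≤ k) :
    optEnergyR (fun _ => 0) k = 0 ∧
    SigmaV (fun _ => 0) = 0 ∧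
    ∀ G : Fin k → Set ℝ, IsPartitionR k G → 0 < energyR (fun _ => 0) G := by
  refine ⟨?_, ?_, ?_⟩
  · apply le_antisymm _ (zero_le)
    apply ENNReal.le_of_forall_pos_le_add
    intro ε hε _
    rw [zero_add]
    obtain ⟨L, hL, h⟩ := lambda_small ε hε
    refine (iInf_le _ ⟨_, part_std k L hL⟩).trans ?_
    exact iSup_le fun i => h _ _ subset_rfl
  · apply le_antisymm _ (zero_le)
    refine iSup_le fun R => iSup_le fun hR => ?_
    apply ENNReal.le_of_forall_pos_le_add
    intro ε hε _
    rw [zero_add]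
    obtain ⟨L, hL, h⟩ := lambda_small ε hε
    exact h R _ fun x hx => hx.1.trans (le_abs_self x)
  · intro G hG
    obtain ⟨i, ⟨b, hb⟩, ⟨a, ha⟩⟩ := exists_bdd k hk G hG
    exact (lambda_pos a b (G i) fun x hx => ⟨ha hx, hb hx⟩).trans_le
      (le_iSup (fun i => lambdaV (fun _ => 0) (G i)) i)
end
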